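/- Let (𝔤, [·,·], β) be a skew-Hom-Lie algebra, V a real vector space, φ : V → V an invertible linear map, and ρ : 𝔤 → gl(V) a representation of (𝔤, [·,·], β) on V with respect to φ. Fix integers k ≥ 1 and s ≥ 0, and for an alternating k-linear map η : 𝔤^k → V define the (k+1)-linear map d^s η by d^s η(x₁,…,x_{k+1}) = Σ_{i=1}^{k+1} (−1)^{i+1} φ^{k+1+s} ∘ ρ(x_i) ∘ φ^{−k−2−s} applied to η(β(x₁),…,x̂_i,…,β(x_{k+1})) + Σ_{i<j} (−1)^{i+j} η([x_i,x_j], β(x₁),…,x̂_i,…,x̂_j,…,β(x_{k+1})), where a hat denotes omission of that argument and φ^{−1} is the inverse of φ. Then d^s ∘ d^s = 0, i.e., for every alternating k-linear map η : 𝔤^k → V and all x₁,…,x_{k+2} ∈ 𝔤, d^s(d^s η)(x₁,…,x_{k+2}) = 0. -/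

import Mathlib

open Finset

/-- The coboundary operator `d^s` of a skew-Hom-Lie algebra with values in a
representation `(V, ρ, φ)`, sending a `(k+1)`-cochain `η` to the `(k+2)`-cochain
`d^s η (x₁,…,x_{k+2}) =
   Σ_i (−1)^{i+1} φ^{(k+1)+1+s} ρ(x_i) φ^{−(k+1)−2−s} η(β x₁,…,x̂_i,…,β x_{k+2})
 + Σ_{i<j} (−1)^{i+j} η([x_i,x_j], β x₁,…,x̂_i,…,x̂_j,…,β x_{k+2})`
(signs written here for 1-based indices as in the paper; below indices are 0-based,
so the signs appear as `(−1)^i` and `(−1)^{i+j}`). -/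
noncomputable def dCob {𝔤 V : Type*} [AddCommGroup 𝔤] [Module ℝ 𝔤]
    [AddCommGroup V] [Module ℝ V]
    (b : 𝔤 →ₗ[ℝ] 𝔤 →ₗ[ℝ] 𝔤) (β : 𝔤 →ₗ[ℝ] 𝔤)
    (φ : V ≃ₗ[ℝ] V) (ρ : 𝔤 →ₗ[ℝ] Module.End ℝ V) (k s : ℕ)
    (η : (Fin (k + 1) → 𝔤) → V) : (Fin (k + 2) → 𝔤) → V :=
  fun x =>
    (∑ i : Fin (k + 2), ((-1 : ℝ) ^ (i : ℕ)) •
      (φ ^ ((k : ℤ) + 2 + (s : ℤ)))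
        ((ρ (x i))
          ((φ ^ (-((k : ℤ) + 3 + (s : ℤ))))
            (η (fun l => β (x (i.succAbove l)))))))
    + ∑ i : Fin (k + 2), ∑ j : Fin (k + 2),
        if h : i < j then
          ((-1 : ℝ) ^ ((i : ℕ) + (j : ℕ))) •
            η (Fin.cons (b (x i) (x j))
                (fun l : Fin k =>
                  β (x (i.succAbove ((j.pred (Fin.pos_iff_ne_zero.mp
                        (lt_of_le_of_lt (Fin.zero_le i) h))).succAbove l)))))
        else 0


section HomLieAux

variable {𝔤 V : Type*} [AddCommGroup 𝔤] [Module ℝ 𝔤] [AddCommGroup V] [Module ℝ V]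

/-- Multilinear cochains. -/
abbrev HLMul (𝔤 V : Type*) [AddCommGroup 𝔤] [Module ℝ 𝔤] [AddCommGroup V] [Module ℝ V] (n : ℕ) :=
  MultilinearMap ℝ (fun _ : Fin n => 𝔤) V

/-- The Lie derivative, as a multilinear map. -/
noncomputable def hlLfun (b : 𝔤 →ₗ[ℝ] 𝔤 →ₗ[ℝ] 𝔤) (β : 𝔤 →ₗ[ℝ] 𝔤) (A : 𝔤 →ₗ[ℝ] Module.End ℝ V)
    (n : ℕ) (y : 𝔤) (η : HLMul 𝔤 V n) : HLMul 𝔤 V n :=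
  (A y).compMultilinearMap (η.compLinearMap fun _ => β)
    - ∑ j, η.compLinearMap (Function.update (fun _ => β) j (b y))

theorem hlLfun_apply (b : 𝔤 →ₗ[ℝ] 𝔤 →ₗ[ℝ] 𝔤) (β : 𝔤 →ₗ[ℝ] 𝔤) (A : 𝔤 →ₗ[ℝ] Module.End ℝ V)
    (n : ℕ) (y : 𝔤) (η : HLMul 𝔤 V n) (x : Fin n → 𝔤) :
    hlLfun b β A n y η x = A y (η fun l => β (x l))
      - ∑ j, η (Function.update (fun l => β (x l)) j (b y (x j))) := by
  simp only [hlLfun, sub_apply, LinearMap.compMultilinearMap_apply,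
    MultilinearMap.compLinearMap_apply, _root_.sum_apply]
  congr 1
  refine Finset.sum_congr rfl fun j _ => ?_
  congr 1
  ext l
  by_cases h : l = j
  · subst h; simp
  · simp [h]

/-- The Lie derivative, bilinear. -/
noncomputable def hlL (b : 𝔤 →ₗ[ℝ] 𝔤 →ₗ[ℝ] 𝔤) (β : 𝔤 →ₗ[ℝ] 𝔤) (A : 𝔤 →ₗ[ℝ] Module.End ℝ V)
    (n : ℕ) : 𝔤 →ₗ[ℝ] HLMul 𝔤 V n →ₗ[ℝ] HLMul 𝔤 V n :=
  LinearMap.mk₂ ℝ (hlLfun b β A n)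
    (by intro y z η; ext x
        simp only [hlLfun_apply, map_add, LinearMap.add_apply, add_apply,
          MultilinearMap.map_update_add, Finset.sum_add_distrib]
        abel)
    (by intro c y η; ext x
        simp only [hlLfun_apply, map_smul, LinearMap.smul_apply, smul_apply,
          MultilinearMap.map_update_smul, ← Finset.smul_sum, smul_sub])
    (by intro y η ξ; ext x
        simp only [hlLfun_apply, map_add, add_apply, Finset.sum_add_distrib]
        abel)
    (by intro c y η; ext x
        simp only [hlLfun_apply, map_smul, smul_apply,
          ← Finset.smul_sum, smul_sub])

theorem hlL_apply (b : 𝔤 →ₗ[ℝ] 𝔤 →ₗ[ℝ] 𝔤) (β : 𝔤 →ₗ[ℝ] 𝔤) (A : 𝔤 →ₗ[ℝ] Module.End ℝ V)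
    (n : ℕ) (y : 𝔤) (η : HLMul 𝔤 V n) (x : Fin n → 𝔤) :
    hlL b β A n y η x = A y (η fun l => β (x l))
      - ∑ j, η (Function.update (fun l => β (x l)) j (b y (x j))) :=
  hlLfun_apply b β A n y η x

/-- Contraction. -/
noncomputable def hlI (n : ℕ) (y : 𝔤) : HLMul 𝔤 V (n + 1) →ₗ[ℝ] HLMul 𝔤 V n where
  toFun η := η.curryLeft y
  map_add' _ _ := rfl
  map_smul' _ _ := rfl

theorem hlI_apply (n : ℕ) (y : 𝔤) (η : HLMul 𝔤 V (n + 1)) (x : Fin n → 𝔤) :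
    hlI n y η x = η (Fin.cons y x) := rfl

theorem hlI_ext {n : ℕ} {η ξ : HLMul 𝔤 V (n + 1)} (h : ∀ y, hlI n y η = hlI n y ξ) : η = ξ := by
  ext x
  have := congrArg (fun f => f (Fin.tail x)) (h (x 0))
  simpa [hlI_apply] using this

theorem hlI_neg (n : ℕ) (y : 𝔤) (η : HLMul 𝔤 V (n + 1)) : hlI n (-y) η = - hlI n y η := by
  have := η.curryLeft.map_neg y
  exact this

/-- Pullback along `β`. -/
noncomputable def hlP (β : 𝔤 →ₗ[ℝ] 𝔤) (n : ℕ) : HLMul 𝔤 V n →ₗ[ℝ] HLMul 𝔤 V n where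
  toFun η := η.compLinearMap fun _ => β
  map_add' _ _ := rfl
  map_smul' _ _ := rfl

theorem hlP_apply (β : 𝔤 →ₗ[ℝ] 𝔤) (n : ℕ) (η : HLMul 𝔤 V n) (x : Fin n → 𝔤) :
    hlP β n η x = η (fun l => β (x l)) := rfl

theorem hlI_hlP (β : 𝔤 →ₗ[ℝ] 𝔤) (n : ℕ) (y : 𝔤) (η : HLMul 𝔤 V (n + 1)) :
    hlI n y (hlP β (n + 1) η) = hlP β n (hlI n (β y) η) := by
  ext x
  simp only [hlI_apply, hlP_apply]
  congr 1
  ext l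
  refine Fin.cases ?_ (fun l => ?_) l <;> simp

/-- The differential on multilinear cochains, defined recursively by Cartan's formula. -/
noncomputable def hlD (b : 𝔤 →ₗ[ℝ] 𝔤 →ₗ[ℝ] 𝔤) (β : 𝔤 →ₗ[ℝ] 𝔤) (A : 𝔤 →ₗ[ℝ] Module.End ℝ V) :
    (n : ℕ) → HLMul 𝔤 V n →ₗ[ℝ] HLMul 𝔤 V (n + 1)
  | 0 => (multilinearCurryLeftEquiv ℝ (fun _ : Fin 1 => 𝔤) V).symm.toLinearMap ∘ₗ
      (hlL b β A 0).flip
  | n + 1 => (multilinearCurryLeftEquiv ℝ (fun _ : Fin (n + 2) => 𝔤) V).symm.toLinearMap ∘ₗ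
      ((hlL b β A (n + 1)).flip -
        LinearMap.mk₂ ℝ (fun (η : HLMul 𝔤 V (n + 1)) (y : 𝔤) =>
            hlD b β A n (η.curryLeft (β y)))
          (by intro η ξ y; rw [← map_add]; rfl)
          (by intro c η y; rw [← map_smul]; rfl)
          (by intro η y z; rw [← map_add, ← map_add, ← map_add])
          (by intro c η y; rw [← map_smul, ← map_smul, ← map_smul]))

variable (b : 𝔤 →ₗ[ℝ] 𝔤 →ₗ[ℝ] 𝔤) (β : 𝔤 →ₗ[ℝ] 𝔤) (A A' : 𝔤 →ₗ[ℝ] Module.End ℝ V)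

theorem hlI_hlD_zero (y : 𝔤) (η : HLMul 𝔤 V 0) :
    hlI 0 y (hlD b β A 0 η) = hlL b β A 0 y η := by
  ext x
  simp [hlI_apply, hlD, LinearMap.uncurryLeft_apply]

theorem hlI_hlD (n : ℕ) (y : 𝔤) (η : HLMul 𝔤 V (n + 1)) :
    hlI (n + 1) y (hlD b β A (n + 1) η)
      = hlL b β A (n + 1) y η - hlD b β A n (hlI n (β y) η) := by
  ext x
  simp only [hlI_apply, hlD]
  rfl

theorem hlI_hlL (n : ℕ) (y z : 𝔤) (η : HLMul 𝔤 V (n + 1)) :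
    hlI n z (hlL b β A (n + 1) y η)
      = hlL b β A n y (hlI n (β z) η) - hlP β n (hlI n (b y z) η) := by
  ext x
  have e : (fun l => β ((Fin.cons z x : Fin (n + 1) → 𝔤) l)) = Fin.cons (β z) (fun l => β (x l)) := by
    ext l; refine Fin.cases ?_ (fun l => ?_) l <;> simp
  simp only [hlI_apply, hlL_apply, sub_apply, hlP_apply, e, Fin.sum_univ_succ,
    Fin.cons_zero, Fin.cons_succ, Fin.update_cons_zero, ← Fin.cons_update]
  abel

theorem hlP_hlL (hβ : ∀ x y : 𝔤, β (b x y) = - b (β x) (β y)) (hA : ∀ x, A (β x) = - A' x)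
    (n : ℕ) (y : 𝔤) (η : HLMul 𝔤 V n) :
    hlP β n (hlL b β A n (β y) η) = - hlL b β A' n y (hlP β n η) := by
  ext x
  simp only [hlL_apply, hlP_apply, neg_apply, hA, LinearMap.neg_apply]
  have : ∀ j, η (fun l => β (Function.update (fun l => β (x l)) j (b y (x j)) l))
      = - η (Function.update (fun l => β (β (x l))) j (b (β y) (β (x j)))) := by
    intro j
    rw [← MultilinearMap.map_update_neg, ← hβ]
    congr 1
    ext l
    by_cases h : l = j
    · subst h; simp
    · simp [h]
  simp only [this, Finset.sum_neg_distrib]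
  abel

theorem hlP_hlD (hβ : ∀ x y : 𝔤, β (b x y) = - b (β x) (β y)) (hA : ∀ x, A (β x) = - A' x)
    (n : ℕ) (η : HLMul 𝔤 V n) :
    hlP β (n + 1) (hlD b β A n η) = - hlD b β A' n (hlP β n η) := by
  induction n with
  | zero =>
    refine hlI_ext fun y => ?_
    rw [hlI_hlP, hlI_hlD_zero, map_neg, hlI_hlD_zero, hlP_hlL b β A A' hβ hA]
  | succ n ih =>
    refine hlI_ext fun y => ?_
    rw [hlI_hlP, hlI_hlD, map_neg, hlI_hlD, map_sub, ih, hlP_hlL b β A A' hβ hA, hlI_hlP]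
    abel

theorem hlL_hlL (hskew : ∀ x y : 𝔤, b x y = - b y x)
    (hβ : ∀ x y : 𝔤, β (b x y) = - b (β x) (β y))
    (hjac : ∀ x y z : 𝔤, b (b y z) (β x) + b (b z x) (β y) + b (b x y) (β z) = 0)
    (hA : ∀ x, A (β x) = - A' x)
    (hAA : ∀ x y, A' x * A (β y) - A' y * A (β x) = A (b x y))
    (n : ℕ) (y z : 𝔤) (η : HLMul 𝔤 V n) :
    hlL b β A' n y (hlL b β A n (β z) η) - hlL b β A' n z (hlL b β A n (β y) η)
      = hlP β n (hlL b β A n (b y z) η) := by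
  induction n generalizing y z with
  | zero =>
    ext x
    simp only [hlL_apply, hlP_apply, sub_apply, ← hAA, LinearMap.sub_apply]
    simp
  | succ n ih =>
    refine hlI_ext fun w => ?_
    have hl : b (b y z) (β w) = b (β y) (b z w) - b (β z) (b y w) := by
      have h1 := hjac w y z
      rw [hskew (b z w), hskew (b w y), hskew w y, map_neg] at h1
      rw [← sub_eq_zero, ← h1]; abel
    have hI : hlI n (b (b y z) (β w)) η = hlI n (b (β y) (b z w)) η - hlI n (b (β z) (b y w)) η := by
      rw [hl, sub_eq_add_neg, sub_eq_add_neg, ← hlI_neg]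
      exact η.curryLeft.map_add _ _
    simp only [hlI_hlP, map_sub, hlI_hlL, hI, ← ih, hβ, hlI_neg, map_neg,
      hlP_hlL b β A A' hβ hA]
    abel

theorem hlL_hlD (hskew : ∀ x y : 𝔤, b x y = - b y x)
    (hβ : ∀ x y : 𝔤, β (b x y) = - b (β x) (β y))
    (hjac : ∀ x y z : 𝔤, b (b y z) (β x) + b (b z x) (β y) + b (b x y) (β z) = 0)
    (hA : ∀ x, A (β x) = - A' x)
    (hAA : ∀ x y, A' x * A (β y) - A' y * A (β x) = A (b x y))
    (n : ℕ) (y : 𝔤) (η : HLMul 𝔤 V n) :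
    hlL b β A' (n + 1) y (hlD b β A n η) = hlD b β A' n (hlL b β A n (β y) η) := by
  induction n generalizing y with
  | zero =>
    refine hlI_ext fun z => ?_
    rw [hlI_hlL, hlI_hlD_zero, hlI_hlD_zero, hlI_hlD_zero,
      ← hlL_hlL b β A A' hskew hβ hjac hA hAA]
    abel
  | succ n ih =>
    refine hlI_ext fun z => ?_
    simp only [hlI_hlL, hlI_hlD, map_sub, ← hlL_hlL b β A A' hskew hβ hjac hA hAA, ih,
      hβ, hlI_neg, map_neg, hlP_hlD b β A A' hβ hA]
    abel

theorem hlD_hlD (hskew : ∀ x y : 𝔤, b x y = - b y x)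
    (hβ : ∀ x y : 𝔤, β (b x y) = - b (β x) (β y))
    (hjac : ∀ x y z : 𝔤, b (b y z) (β x) + b (b z x) (β y) + b (b x y) (β z) = 0)
    (hA : ∀ x, A (β x) = - A' x)
    (hAA : ∀ x y, A' x * A (β y) - A' y * A (β x) = A (b x y))
    (n : ℕ) (η : HLMul 𝔤 V n) :
    hlD b β A' (n + 1) (hlD b β A n η) = 0 := by
  induction n with
  | zero =>
    refine hlI_ext fun z => ?_
    rw [hlI_hlD, hlL_hlD b β A A' hskew hβ hjac hA hAA, hlI_hlD_zero, sub_self, map_zero]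
  | succ n ih =>
    refine hlI_ext fun z => ?_
    rw [hlI_hlD, hlL_hlD b β A A' hskew hβ hjac hA hAA, hlI_hlD, map_sub, ih, map_zero]
    abel

/-- Skew-symmetry of cochains, recursively. -/
def HLSkew : (n : ℕ) → HLMul 𝔤 V n → Prop
  | 0, _ => True
  | 1, _ => True
  | n + 2, η => (∀ y, HLSkew (n + 1) (hlI (n + 1) y η)) ∧
      ∀ y z, hlI n z (hlI (n + 1) y η) = - hlI n y (hlI (n + 1) z η)

theorem HLSkew.sub : ∀ {n : ℕ} {η ξ : HLMul 𝔤 V n}, HLSkew n η → HLSkew n ξ → HLSkew n (η - ξ)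
  | 0, _, _, _, _ => trivial
  | 1, _, _, _, _ => trivial
  | n + 2, η, ξ, h, h' => by
    refine ⟨fun y => ?_, fun y z => ?_⟩
    · rw [map_sub]; exact HLSkew.sub (h.1 y) (h'.1 y)
    · simp only [map_sub, h.2 y z, h'.2 y z]; abel

theorem HLSkew.contr : ∀ {n : ℕ} {η : HLMul 𝔤 V (n + 1)}, HLSkew (n + 1) η → ∀ y, HLSkew n (hlI n y η)
  | 0, _, _, _ => trivial
  | _ + 1, _, h, y => h.1 y

theorem HLSkew.pull : ∀ {n : ℕ} {η : HLMul 𝔤 V n}, HLSkew n η → HLSkew n (hlP β n η)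
  | 0, _, _ => trivial
  | 1, _, _ => trivial
  | n + 2, η, h => by
    refine ⟨fun y => ?_, fun y z => ?_⟩
    · rw [hlI_hlP]; exact HLSkew.pull (h.1 _)
    · simp only [hlI_hlP, h.2 (β y) (β z), map_neg]

theorem HLSkew.lie : ∀ {n : ℕ} {η : HLMul 𝔤 V n}, HLSkew n η → ∀ y, HLSkew n (hlL b β A n y η)
  | 0, _, _, _ => trivial
  | 1, _, _, _ => trivial
  | n + 2, η, h, y => by
    refine ⟨fun z => ?_, fun z w => ?_⟩
    · rw [hlI_hlL]
      exact (HLSkew.lie (h.1 _) y).sub ((h.1 _).pull β)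
    · simp only [hlI_hlL, map_sub, hlI_hlP, h.2 (β z) (β w), h.2 (b y w) (β z),
        h.2 (b y z) (β w), map_neg]
      abel

theorem HLSkew.diff (hskew : ∀ x y : 𝔤, b x y = - b y x) :
    ∀ {n : ℕ} {η : HLMul 𝔤 V n}, HLSkew n η → HLSkew (n + 1) (hlD b β A n η)
  | 0, _, _ => trivial
  | 1, η, h => by
    refine ⟨fun z => trivial, fun z w => ?_⟩
    simp only [hlI_hlD, hlI_hlL, map_sub, hlI_hlD_zero, hskew z w, hlI_neg, map_neg]
    abel
  | n + 2, η, h => by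
    refine ⟨fun z => ?_, fun z w => ?_⟩
    · rw [hlI_hlD]
      exact (h.lie b β A z).sub (HLSkew.diff hskew (h.1 _))
    · simp only [hlI_hlD, hlI_hlL, map_sub, hskew z w, hlI_neg, map_neg, h.2 (β z) (β w)]
      abel

theorem hlSkew_alt : ∀ {n : ℕ} (η : AlternatingMap ℝ 𝔤 V (Fin n)), HLSkew n η.toMultilinearMap
  | 0, _ => trivial
  | 1, _ => trivial
  | n + 2, η => by
    refine ⟨fun z => hlSkew_alt (η.curryLeft z), fun z w => ?_⟩
    ext x
    have := η.map_swap (Fin.cons z (Fin.cons w x)) (i := 0) (j := 1) (by simp)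
    simp only [hlI_apply, neg_apply]
    change η _ = - η _
    rw [← neg_eq_iff_eq_neg, ← this]
    congr 1
    ext l
    refine Fin.cases ?_ (fun l => Fin.cases ?_ (fun l => ?_) l) l
    · simp
    · simp
    · have h0 : (l.succ.succ : Fin (n + 2)) ≠ 0 := Fin.succ_ne_zero _
      have h1 : (l.succ.succ : Fin (n + 2)) ≠ 1 := by
        intro h; simp [Fin.ext_iff] at h
      simp [Equiv.swap_apply_of_ne_of_ne h0 h1]

theorem HLSkew.cons_removeNth : ∀ {n : ℕ} {η : HLMul 𝔤 V (n + 1)}, HLSkew (n + 1) η →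
    ∀ (a : 𝔤) (x : Fin (n + 1) → 𝔤) (j : Fin (n + 1)),
    η (Fin.cons a (fun l => x (j.succAbove l))) = (-1 : ℝ) ^ (j : ℕ) • η (Function.update x j a)
  | 0, η, _, a, x, j => by
    obtain rfl : j = 0 := Fin.fin_one_eq_zero j
    simp only [Fin.val_zero, pow_zero, one_smul]
    congr 1; ext l; obtain rfl : l = 0 := Fin.fin_one_eq_zero l
    simp
  | n + 1, η, h, a, x, j => by
    refine Fin.cases ?_ (fun j => ?_) j
    · simp only [Fin.val_zero, pow_zero, one_smul]
      congr 1; ext l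
      refine Fin.cases ?_ (fun l => ?_) l <;> simp
    · have e : (fun l => x (j.succ.succAbove l))
          = Fin.cons (x 0) (fun l => Fin.tail x (j.succAbove l)) := by
        ext l; refine Fin.cases ?_ (fun l => ?_) l <;> simp [Fin.tail]
      have h1 := congrArg (fun f => f (fun l => Fin.tail x (j.succAbove l))) (h.2 a (x 0))
      simp only [hlI_apply, neg_apply] at h1
      have h2 := HLSkew.cons_removeNth (h.1 (x 0)) a (Fin.tail x) j
      simp only [hlI_apply] at h2
      rw [e, h1, h2, Fin.cons_update, Fin.cons_self_tail, Fin.val_succ, pow_succ]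
      simp

/-- The explicit formula for the differential with a general action `A`. -/
noncomputable def hlC (k : ℕ) (η : (Fin (k + 1) → 𝔤) → V) (x : Fin (k + 2) → 𝔤) : V :=
    (∑ i : Fin (k + 2), ((-1 : ℝ) ^ (i : ℕ)) • A (x i) (η (fun l => β (x (i.succAbove l)))))
    + ∑ i : Fin (k + 2), ∑ j : Fin (k + 2),
        if h : i < j then
          ((-1 : ℝ) ^ ((i : ℕ) + (j : ℕ))) •
            η (Fin.cons (b (x i) (x j))
                (fun l : Fin k =>
                  β (x (i.succAbove ((j.pred (Fin.pos_iff_ne_zero.mp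
                        (lt_of_le_of_lt (Fin.zero_le i) h))).succAbove l)))))
        else 0

theorem hlC_zero (η : HLMul 𝔤 V 1) (x : Fin 2 → 𝔤) :
    hlC b β A 0 η x = hlD b β A 1 η x := by
  rw [← Fin.cons_self_tail x, ← hlI_apply, hlI_hlD, sub_apply, hlL_apply,
    ← Fin.cons_self_tail (Fin.tail x), ← hlI_apply 0 (Fin.tail x 0), hlI_hlD_zero, hlL_apply,
    hlI_apply]
  rw [hlC, Fin.sum_univ_two, Fin.sum_univ_two, Fin.sum_univ_two, Fin.sum_univ_two]
  have e : ∀ f g : Fin 1 → 𝔤, f 0 = g 0 → η f = η g := by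
    intro f g h; congr 1; ext l; obtain rfl : l = 0 := Fin.fin_one_eq_zero l
    exact h
  simp [Fin.tail]
  have h1 : η (fun l => β ((Fin.cons (x 0) (Fin.cons (x 1) (Fin.tail (Fin.tail x))) : Fin 2 → 𝔤)
      (Fin.succAbove 1 l))) = η (Fin.cons (β (x 0)) fun l => β (x l.succ.succ)) := e _ _ rfl
  have h2 : η (Fin.cons (b (x 0) (x 1)) fun l => β (x l.succ.succ))
      = η (Function.update (fun l => β ((Fin.cons (x 1) (Fin.tail (Fin.tail x)) : Fin 1 → 𝔤) l)) 0
        (b (x 0) (x 1))) := e _ _ (by simp)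
  rw [h1, h2]
  abel

theorem hlC_succ (k : ℕ) (η : HLMul 𝔤 V (k + 2)) (hη : HLSkew (k + 2) η) (x : Fin (k + 3) → 𝔤) :
    hlC b β A (k + 1) η x = hlL b β A (k + 2) (x 0) η (Fin.tail x)
      - hlC b β A k (hlI (k + 1) (β (x 0)) η) (Fin.tail x) := by
  have hsw : ∀ y z (w : Fin k → 𝔤), η (Fin.cons y (Fin.cons z w))
      = - η (Fin.cons z (Fin.cons y w)) := fun y z w => by
    have h1 := congrArg (fun f => f w) (hη.2 y z)
    simpa only [hlI_apply, neg_apply] using h1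
  have e1 : ∀ i : Fin (k + 2), (fun l => β (x (i.succ.succAbove l)))
      = Fin.cons (β (x 0)) (fun l => β (Fin.tail x (i.succAbove l))) := by
    intro i; ext l; refine Fin.cases ?_ (fun l => ?_) l <;> simp [Fin.tail]
  have e2 : ∀ (i j : Fin (k + 2)) (h : i.succ < j.succ),
      ((-1 : ℝ) ^ ((i.succ : ℕ) + (j.succ : ℕ))) •
            η (Fin.cons (b (x i.succ) (x j.succ))
                (fun l : Fin (k + 1) =>
                  β (x (i.succ.succAbove ((j.succ.pred (Fin.pos_iff_ne_zero.mp
                        (lt_of_le_of_lt (Fin.zero_le i.succ) h))).succAbove l)))))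
      = - (((-1 : ℝ) ^ ((i : ℕ) + (j : ℕ))) •
            hlI (k + 1) (β (x 0)) η (Fin.cons (b (Fin.tail x i) (Fin.tail x j))
                (fun l : Fin k =>
                  β (Fin.tail x (i.succAbove ((j.pred (Fin.pos_iff_ne_zero.mp
                        (lt_of_le_of_lt (Fin.zero_le i) (Fin.succ_lt_succ_iff.mp h)))).succAbove l)))))) := by
    intro i j h
    obtain ⟨j, rfl⟩ := Fin.exists_succ_eq.mpr (Fin.pos_iff_ne_zero.mp
                        (lt_of_le_of_lt (Fin.zero_le i) (Fin.succ_lt_succ_iff.mp h)))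
    simp only [Fin.pred_succ, hlI_apply]
    have e3 : (fun l : Fin (k + 1) => β (x (i.succ.succAbove (j.succ.succAbove l))))
        = Fin.cons (β (x 0)) (fun l => β (Fin.tail x (i.succAbove (j.succAbove l)))) := by
      ext l; refine Fin.cases ?_ (fun l => ?_) l <;> simp [Fin.tail]
    rw [e3, hsw, smul_neg]
    congr 2
    simp only [Fin.val_succ]
    ring
  have e4 : ∀ j : Fin (k + 2), ((-1 : ℝ) ^ (j.succ : ℕ)) •
      η (Fin.cons (b (x 0) (x j.succ)) (fun l : Fin (k + 1) => β (Fin.tail x (j.succAbove l))))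
      = - η (Function.update (fun l => β (Fin.tail x l)) j (b (x 0) (Fin.tail x j))) := by
    intro j
    rw [hη.cons_removeNth _ (fun l => β (Fin.tail x l)) j, smul_smul, Fin.val_succ, pow_succ]
    have : ((-1 : ℝ) ^ (j : ℕ) * -1 * (-1) ^ (j : ℕ)) = -1 := by
      rw [mul_right_comm, ← mul_pow]; simp
    rw [this, neg_one_smul]
    rfl
  have e5 : (∑ i : Fin (k + 3), ((-1 : ℝ) ^ (i : ℕ)) • A (x i) (η (fun l => β (x (i.succAbove l)))))
      = A (x 0) (η fun l => β (Fin.tail x l)) - ∑ i : Fin (k + 2), ((-1 : ℝ) ^ (i : ℕ)) •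
        A (Fin.tail x i) (hlI (k + 1) (β (x 0)) η (fun l => β (Fin.tail x (i.succAbove l)))) := by
    rw [Fin.sum_univ_succ, sub_eq_add_neg, ← Finset.sum_neg_distrib]
    congr 1
    · simp [Fin.tail]
    · refine Finset.sum_congr rfl fun i _ => ?_
      rw [e1, Fin.val_succ, pow_succ, hlI_apply]
      simp [Fin.tail]
  rw [hlC, e5, hlL_apply, hlC, Fin.sum_univ_succ (n := k + 2), Fin.sum_univ_succ (n := k + 2),
    dif_neg (lt_irrefl _), zero_add]
  have e6 : ∀ j : Fin (k + 2), (if h : (0 : Fin (k + 3)) < j.succ then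
          ((-1 : ℝ) ^ (((0 : Fin (k + 3)) : ℕ) + (j.succ : ℕ))) •
            η (Fin.cons (b (x 0) (x j.succ))
                (fun l : Fin (k + 1) =>
                  β (x ((0 : Fin (k + 3)).succAbove ((j.succ.pred (Fin.pos_iff_ne_zero.mp
                        (lt_of_le_of_lt (Fin.zero_le 0) h))).succAbove l)))))
        else 0) = - η (Function.update (fun l => β (Fin.tail x l)) j (b (x 0) (Fin.tail x j))) := by
    intro j
    rw [dif_pos (Fin.succ_pos j), ← e4]
    simp only [Fin.val_zero, zero_add, Fin.pred_succ, Fin.zero_succAbove, Fin.tail]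
  rw [Finset.sum_congr rfl fun j _ => e6 j, Finset.sum_neg_distrib]
  have e7 : ∀ i : Fin (k + 2), (∑ j : Fin (k + 3), if h : i.succ < j then
          ((-1 : ℝ) ^ ((i.succ : ℕ) + (j : ℕ))) •
            η (Fin.cons (b (x i.succ) (x j))
                (fun l : Fin (k + 1) =>
                  β (x (i.succ.succAbove ((j.pred (Fin.pos_iff_ne_zero.mp
                        (lt_of_le_of_lt (Fin.zero_le i.succ) h))).succAbove l)))))
        else 0) = - ∑ j : Fin (k + 2), if h : i < j then
          ((-1 : ℝ) ^ ((i : ℕ) + (j : ℕ))) •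
            hlI (k + 1) (β (x 0)) η (Fin.cons (b (Fin.tail x i) (Fin.tail x j))
                (fun l : Fin k =>
                  β (Fin.tail x (i.succAbove ((j.pred (Fin.pos_iff_ne_zero.mp
                        (lt_of_le_of_lt (Fin.zero_le i) h))).succAbove l)))))
        else 0 := by
    intro i
    rw [Fin.sum_univ_succ, dif_neg (Fin.not_lt_zero _), zero_add, ← Finset.sum_neg_distrib]
    refine Finset.sum_congr rfl fun j _ => ?_
    by_cases h : i < j
    · rw [dif_pos h, dif_pos (Fin.succ_lt_succ_iff.mpr h), e2 i j (Fin.succ_lt_succ_iff.mpr h)]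
    · rw [dif_neg h, dif_neg (fun h' => h (Fin.succ_lt_succ_iff.mp h')), neg_zero]
  rw [Finset.sum_congr rfl fun i _ => e7 i, Finset.sum_neg_distrib]
  abel

theorem hlC_eq : ∀ (k : ℕ) (η : HLMul 𝔤 V (k + 1)) (_ : HLSkew (k + 1) η) (x : Fin (k + 2) → 𝔤),
    hlC b β A k η x = hlD b β A (k + 1) η x
  | 0, η, _, x => hlC_zero b β A η x
  | k + 1, η, hη, x => by
    rw [hlC_succ b β A k η hη, hlC_eq k _ (hη.contr _)]
    conv_rhs => rw [← Fin.cons_self_tail x, ← hlI_apply, hlI_hlD, sub_apply]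

/-- The twisted action `φ^m ρ(x) φ^{-(m+1)}`. -/
noncomputable def hlA (φ : V ≃ₗ[ℝ] V) (ρ : 𝔤 →ₗ[ℝ] Module.End ℝ V) (m n : ℤ) :
    𝔤 →ₗ[ℝ] Module.End ℝ V where
  toFun x := (φ ^ m).toLinearMap ∘ₗ (ρ x) ∘ₗ (φ ^ (-n)).toLinearMap
  map_add' x y := by ext v; simp
  map_smul' c x := by ext v; simp

theorem hlA_apply (φ : V ≃ₗ[ℝ] V) (ρ : 𝔤 →ₗ[ℝ] Module.End ℝ V) (m n : ℤ) (x : 𝔤) (v : V) :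
    hlA φ ρ m n x v = (φ ^ m) (ρ x ((φ ^ (-n)) v)) := rfl

theorem hl_zpow_apply (φ : V ≃ₗ[ℝ] V) (m n : ℤ) (v : V) :
    (φ ^ m) ((φ ^ n) v) = (φ ^ (m + n)) v := by
  rw [zpow_add]; rfl

theorem hlA_beta (φ : V ≃ₗ[ℝ] V) (ρ : 𝔤 →ₗ[ℝ] Module.End ℝ V)
    (hrep1 : ∀ x : 𝔤, ρ (β x) * (φ.toLinearMap : Module.End ℝ V)
        = -((φ.toLinearMap : Module.End ℝ V) * ρ x)) (m n m' n' : ℤ) (hm : m' = m + 1)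
    (hn : n' = n + 1) (x : 𝔤) :
    hlA φ ρ m n (β x) = - hlA φ ρ m' n' x := by
  subst hm hn
  have h1 : ∀ v, ρ (β x) (φ v) = - φ (ρ x v) := fun v => LinearMap.congr_fun (hrep1 x) v
  ext v
  rw [LinearMap.neg_apply, hlA_apply, hlA_apply]
  have e : (φ ^ (-n)) v = φ ((φ ^ (-(n + 1))) v) := by
    have := hl_zpow_apply φ 1 (-(n + 1)) v
    rw [zpow_one] at this
    rw [this]; congr 2; ring
  have e2 : ∀ w, (φ ^ (m + 1)) w = (φ ^ m) (φ w) := by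
    intro w
    rw [← hl_zpow_apply, zpow_one]
  rw [e, h1, e2, map_neg]

theorem hlA_bracket (φ : V ≃ₗ[ℝ] V) (ρ : 𝔤 →ₗ[ℝ] Module.End ℝ V)
    (hrep1 : ∀ x : 𝔤, ρ (β x) * (φ.toLinearMap : Module.End ℝ V)
        = -((φ.toLinearMap : Module.End ℝ V) * ρ x))
    (hrep2 : ∀ x y : 𝔤, ρ (b x y) * (φ.toLinearMap : Module.End ℝ V)
        = ρ (β x) * ρ y - ρ (β y) * ρ x) (m n m' n' : ℤ) (hn : n = m + 1) (hm : m' = m + 1)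
    (hn' : n' = m + 2) (x y : 𝔤) :
    hlA φ ρ m' n' x * hlA φ ρ m n (β y) - hlA φ ρ m' n' y * hlA φ ρ m n (β x)
      = hlA φ ρ m n (b x y) := by
  have h1 := hlA_beta β φ ρ hrep1 m n m' n' hm (by omega)
  have h2 : ∀ x y v, ρ (b x y) (φ v) = ρ (β x) (ρ y v) - ρ (β y) (ρ x v) :=
    fun x y v => LinearMap.congr_fun (hrep2 x y) v
  have key : ∀ x y v, hlA φ ρ m' n' x (hlA φ ρ m n (β y) v)
      = (φ ^ m) (ρ (β x) (ρ y ((φ ^ (-n')) v))) := by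
    intro x y v
    have h3 : hlA φ ρ m' n' x = - hlA φ ρ m n (β x) := by rw [h1, neg_neg]
    rw [h3, h1 y, LinearMap.neg_apply, LinearMap.neg_apply, map_neg, neg_neg, hlA_apply,
      hlA_apply, hl_zpow_apply]
    rw [show -n + m' = 0 by omega]
    rfl
  ext v
  rw [LinearMap.sub_apply, Module.End.mul_apply, Module.End.mul_apply, key, key, hlA_apply]
  have e : (φ ^ (-n)) v = φ ((φ ^ (-n')) v) := by
    have := hl_zpow_apply φ 1 (-n') v
    rw [zpow_one] at this
    rw [this]; congr 2; omega
  rw [e, h2, map_sub]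

end HomLieAux

/-- for a representation `ρ` of a skew-Hom-Lie algebra `(𝔤,[·,·],β)`
on `V` with respect to an invertible `φ`, the operator `d^s` squares to zero on
alternating `(k+1)`-cochains (`k+1 ≥ 1`). -/
theorem dCob_dCob_eq_zero
    {𝔤 V : Type*} [AddCommGroup 𝔤] [Module ℝ 𝔤] [AddCommGroup V] [Module ℝ V]
    (b : 𝔤 →ₗ[ℝ] 𝔤 →ₗ[ℝ] 𝔤) (hskew : ∀ x y : 𝔤, b x y = - b y x)
    (β : 𝔤 →ₗ[ℝ] 𝔤)
    (hβ : ∀ x y : 𝔤, β (b x y) = - b (β x) (β y))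
    (hjac : ∀ x y z : 𝔤, b (b y z) (β x) + b (b z x) (β y) + b (b x y) (β z) = 0)
    (φ : V ≃ₗ[ℝ] V) (ρ : 𝔤 →ₗ[ℝ] Module.End ℝ V)
    (hrep1 : ∀ x : 𝔤, ρ (β x) * (φ.toLinearMap : Module.End ℝ V)
        = -((φ.toLinearMap : Module.End ℝ V) * ρ x))
    (hrep2 : ∀ x y : 𝔤, ρ (b x y) * (φ.toLinearMap : Module.End ℝ V)
        = ρ (β x) * ρ y - ρ (β y) * ρ x)
    (k s : ℕ) (η : AlternatingMap ℝ 𝔤 V (Fin (k + 1)))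
    (x : Fin (k + 3) → 𝔤) :
    dCob b β φ ρ (k + 1) s (dCob b β φ ρ k s ⇑η) x = 0 := by
  have hC : ∀ (k : ℕ) (ξ : (Fin (k + 1) → 𝔤) → V), dCob b β φ ρ k s ξ
      = hlC b β (hlA φ ρ ((k : ℤ) + 2 + (s : ℤ)) ((k : ℤ) + 3 + (s : ℤ))) k ξ := fun _ _ => rfl
  have h1 : dCob b β φ ρ k s ⇑η
      = ⇑(hlD b β (hlA φ ρ ((k : ℤ) + 2 + (s : ℤ)) ((k : ℤ) + 3 + (s : ℤ))) (k + 1)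
          η.toMultilinearMap) := by
    rw [hC]
    funext z
    exact hlC_eq b β _ k η.toMultilinearMap (hlSkew_alt η) z
  rw [h1, hC, hlC_eq b β _ (k + 1) _ ((hlSkew_alt η).diff b β _ hskew), hlD_hlD b β _ _ hskew hβ hjac]
  · rfl
  · exact hlA_beta β φ ρ hrep1 _ _ _ _ (by push_cast; ring) (by push_cast; ring)
  · exact hlA_bracket b β φ ρ hrep1 hrep2 _ _ _ _ (by ring) (by push_cast; ring)
      (by push_cast; ring)
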